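/- arXiv:1301.4463 — 2 statements merged into one kernel-verified Lean document; each statement's English description precedes it below -/
import Mathlib

section
/- Let X be a real-valued Lévy process on a filtered probability space satisfying the usual conditions, and let X̄_t := sup{X_s : s ∈ [0,t]} be its running supremum process. Then X̄ is P-almost surely continuous if and only if X has P-almost surely no positive jumps (i.e., P-a.s., X_{t−} ≥ X_t for all t ≥ 0). -/
open MeasureTheory ProbabilityTheory Filter Set
open scoped ENNReal Topology

/-- Left limit of a path at time `t`, with the convention `f(0-) := f(0)`
(and junk `f t` for `t < 0`). -/
noncomputable def leftLimAt (f : ℝ → ℝ) (t : ℝ) : ℝ :=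
  if 0 < t then Function.leftLim f t else f t

/-- A path `f : [0,∞) → ℝ` is càdlàg: right-continuous on `[0,∞)`,
with left limits on `(0,∞)`. -/
def IsCadlag (f : ℝ → ℝ) : Prop :=
  (∀ t : ℝ, 0 ≤ t → ContinuousWithinAt f (Set.Ici t) t) ∧
  (∀ t : ℝ, 0 < t → ∃ l : ℝ, Filter.Tendsto f (nhdsWithin t (Set.Iio t)) (nhds l))

/-- `X` is a Lévy process w.r.t. the filtration `F` under `P`, on a filtered
probability space satisfying the usual conditions. -/
structure IsLevy {Ω : Type*} {m0 : MeasurableSpace Ω} (P : Measure Ω)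
    (F : MeasureTheory.Filtration ℝ m0) (X : ℝ → Ω → ℝ) : Prop where
  isProb : IsProbabilityMeasure P
  complete : P.IsComplete
  rightCont : ∀ t : ℝ, F t = ⨅ s : Set.Ioi t, F (s : ℝ)
  nullF0 : ∀ N : Set Ω, P N = 0 → MeasurableSet[F 0] N
  adapted : ∀ t : ℝ, Measurable[F t] (X t)
  start : P {ω | X 0 ω = 0} = 1
  cadlag : ∀ᵐ ω ∂P, IsCadlag (fun t => X t ω)
  indep : ∀ s t : ℝ, 0 ≤ s → s ≤ t →
    ProbabilityTheory.Indep
      (MeasurableSpace.comap (fun ω => X t ω - X s ω) inferInstance) (F s) P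
  statInc : ∀ s t : ℝ, 0 ≤ s → s ≤ t →
    Measure.map (fun ω => X t ω - X s ω) P = Measure.map (X (t - s)) P

/-- First passage time `T_x = inf{t ≥ 0 : X_t ≥ x}` (valued in `[0,∞]`, `inf ∅ = ∞`). -/
noncomputable def hitT {Ω : Type*} (X : ℝ → Ω → ℝ) (x : ℝ) (ω : Ω) : ℝ≥0∞ :=
  sInf ((fun t : ℝ => ENNReal.ofReal t) '' {t : ℝ | 0 ≤ t ∧ x ≤ X t ω})

/-- First passage time `T̂_x = inf{t ≥ 0 : X_t > x}`. -/
noncomputable def hitThat {Ω : Type*} (X : ℝ → Ω → ℝ) (x : ℝ) (ω : Ω) : ℝ≥0∞ :=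
  sInf ((fun t : ℝ => ENNReal.ofReal t) '' {t : ℝ | 0 ≤ t ∧ x < X t ω})

/-- `X(T_x)`, the position at the first passage time (junk if `T_x = ∞`). -/
noncomputable def stopVal {Ω : Type*} (X : ℝ → Ω → ℝ) (x : ℝ) (ω : Ω) : ℝ :=
  X (hitT X x ω).toReal ω

/-- `X(T̂_x)`. -/
noncomputable def stopValHat {Ω : Type*} (X : ℝ → Ω → ℝ) (x : ℝ) (ω : Ω) : ℝ :=
  X (hitThat X x ω).toReal ω

/-- `Q^x(B) = P({X(T_x) ∈ B} ∩ {T_x < ∞})`. -/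
noncomputable def Qfun {Ω : Type*} {m0 : MeasurableSpace Ω} (P : Measure Ω)
    (X : ℝ → Ω → ℝ) (x : ℝ) (B : Set ℝ) : ℝ≥0∞ :=
  P ({ω | stopVal X x ω ∈ B} ∩ {ω | hitT X x ω < ⊤})

/-- Running supremum `X̄_t = sup{X_s : s ∈ [0,t]}`. -/
noncomputable def runSup {Ω : Type*} (X : ℝ → Ω → ℝ) (t : ℝ) (ω : Ω) : ℝ :=
  sSup ((fun s => X s ω) '' Set.Icc 0 t)

/-!
If `X` has no positive jump at `t`, then its running supremum `X̄` has none either, and `X̄` is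
right-continuous because `X` is.

Conversely, a positive jump of `X` at `t` need not be visible in `X̄`, since it may stay below the
past supremum. It becomes visible once the path is restarted at a rational time `q < t` so close to
`t` that `X` stays near `X_{t-}` on `[q, t)`. The restarted increments `(X_{q+r} - X_q)_r` have the
law of `(X_r - X_0)_r`, and continuity of the running supremum of a càdlàg path can be read off its
rational coordinates. So almost surely the running suprema of all the restarted paths are
continuous at once, which excludes every positive jump.
-/

open scoped NNReal NNRat

section RationalTimes

lemma exists_nnrat_btwn {K : Type*} [Field K] [LinearOrder K] [IsStrictOrderedRing K]
    [Archimedean K] {x y : K} (hx : 0 ≤ x) (hxy : x < y) : ∃ q : ℚ≥0, x < q ∧ (q : K) < y := by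
  obtain ⟨q, hxq, hqy⟩ := exists_rat_btwn hxy
  lift q to ℚ≥0 using by exact_mod_cast hx.trans hxq.le
  exact ⟨q, by simpa using hxq, by simpa using hqy⟩

lemma exists_nnrat_btwn_of_eventually_nhdsGE {p : ℝ → Prop} {a b : ℝ} (ha : 0 ≤ a) (hab : a < b)
    (hp : ∀ᶠ x in 𝓝[≥] a, p x) : ∃ q : ℚ≥0, a < q ∧ (q : ℝ) < b ∧ p q := by
  obtain ⟨c, hac, hc⟩ := mem_nhdsGE_iff_exists_Ico_subset.1 hp
  obtain ⟨q, haq, hq⟩ := exists_nnrat_btwn ha (lt_min hab hac)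
  exact ⟨q, haq, hq.trans_le (min_le_left b c), hc ⟨haq.le, hq.trans_le (min_le_right b c)⟩⟩

end RationalTimes

namespace IsCadlag

variable {f : ℝ → ℝ}

lemma tendsto_leftLimAt (hf : IsCadlag f) {t : ℝ} (ht : 0 < t) :
    Tendsto f (𝓝[<] t) (𝓝 (leftLimAt f t)) := by
  obtain ⟨l, hl⟩ := hf.2 t ht
  rwa [leftLimAt, if_pos ht, leftLim_eq_of_tendsto hl]

lemma isBoundedUnder_le_nhdsWithin_Ici (hf : IsCadlag f) {t : ℝ} (ht : 0 ≤ t) :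
    (𝓝[Ici 0] t).IsBoundedUnder (· ≤ ·) f := by
  have hright : (𝓝[≥] t).IsBoundedUnder (· ≤ ·) f := Tendsto.isBoundedUnder_le (hf.1 t ht)
  obtain rfl | ht := ht.eq_or_lt
  · exact hright
  · have hleft : (𝓝[<] t).IsBoundedUnder (· ≤ ·) f := (hf.tendsto_leftLimAt ht).isBoundedUnder_le
    refine IsBoundedUnder.mono nhdsWithin_le_nhds ?_
    rw [← nhdsLT_sup_nhdsGE, IsBoundedUnder, map_sup]
    exact isBounded_sup hleft hright

lemma bddAbove_image_Icc (hf : IsCadlag f) (t : ℝ) : BddAbove (f '' Icc 0 t) := by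
  refine isCompact_Icc.induction_on (p := fun s => BddAbove (f '' s)) (by simp)
    (fun _ _ hsub hbdd => hbdd.mono (image_mono hsub))
    (fun _ _ hs ht => by simpa only [image_union] using hs.union ht) fun x hx => ?_
  obtain ⟨C, hC⟩ := hf.isBoundedUnder_le_nhdsWithin_Ici hx.1
  exact ⟨{y | f y ≤ C}, nhdsWithin_mono x Icc_subset_Ici_self (eventually_map.1 hC),
    C, forall_mem_image.2 fun _ => id⟩

end IsCadlag

section RunningSupremum

variable {Ω : Type*} {X : ℝ → Ω → ℝ} {ω : Ω} {s t C : ℝ}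

lemma le_runSup (hX : IsCadlag fun t => X t ω) (hs : 0 ≤ s) (hst : s ≤ t) :
    X s ω ≤ runSup X t ω :=
  le_csSup (hX.bddAbove_image_Icc t) ⟨s, ⟨hs, hst⟩, rfl⟩

lemma runSup_le (ht : 0 ≤ t) (h : ∀ s ∈ Icc 0 t, X s ω ≤ C) : runSup X t ω ≤ C :=
  csSup_le ((nonempty_Icc.2 ht).image _) (forall_mem_image.2 h)

lemma exists_lt_of_lt_runSup (ht : 0 ≤ t) (h : C < runSup X t ω) :
    ∃ s ∈ Icc 0 t, C < X s ω := by
  contrapose! h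
  exact runSup_le ht h

lemma monotoneOn_runSup (hX : IsCadlag fun t => X t ω) :
    MonotoneOn (fun t => runSup X t ω) (Ici 0) := fun _ hs _ _ hst =>
  runSup_le hs fun _ hv => le_runSup hX hv.1 (hv.2.trans hst)

lemma exists_nnrat_lt_of_lt_runSup (hX : IsCadlag fun t => X t ω) {s : ℚ≥0}
    (h : C < runSup X s ω) : ∃ u ≤ s, C < X u ω := by
  obtain ⟨v, ⟨hv, hvs⟩, hCv⟩ := exists_lt_of_lt_runSup s.cast_nonneg h
  obtain rfl | hvs := hvs.eq_or_lt
  · exact ⟨s, le_rfl, hCv⟩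
  · obtain ⟨u, -, hus, hCu⟩ :=
      exists_nnrat_btwn_of_eventually_nhdsGE hv hvs ((hX.1 v hv).eventually_const_lt hCv)
    exact ⟨u, by exact_mod_cast hus.le, hCu⟩

lemma continuousWithinAt_runSup_Ici (hX : IsCadlag fun t => X t ω) (ht : 0 ≤ t) :
    ContinuousWithinAt (fun t => runSup X t ω) (Ici t) t := by
  refine tendsto_order.2 ⟨fun C hC => ?_, fun C hC => ?_⟩
  · filter_upwards [self_mem_nhdsWithin] with x hx
    exact hC.trans_le (monotoneOn_runSup hX ht (ht.trans hx) hx)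
  · obtain ⟨D, hD, hDC⟩ := exists_between hC
    have hXD : ∀ᶠ x in 𝓝[≥] t, X x ω < D :=
      (hX.1 t ht).eventually_lt_const ((le_runSup hX ht le_rfl).trans_lt hD)
    obtain ⟨c, hc, hcD⟩ := mem_nhdsGE_iff_exists_Ico_subset.1 hXD
    filter_upwards [Ico_mem_nhdsGE hc] with x hx
    refine (runSup_le (ht.trans hx.1) fun v hv => ?_).trans_lt hDC
    obtain hvt | htv := le_total v t
    · exact (le_runSup hX hv.1 hvt).trans hD.le
    · exact (hcD ⟨htv, hv.2.trans_lt hx.2⟩).le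

lemma continuousWithinAt_runSup_Iio (hX : IsCadlag fun t => X t ω) (ht : 0 < t)
    (hjump : X t ω ≤ leftLimAt (fun u => X u ω) t) :
    ContinuousWithinAt (fun t => runSup X t ω) (Iio t) t := by
  have hpos : ∀ᶠ x in 𝓝[<] t, x ∈ Ioo 0 t := Ioo_mem_nhdsLT ht
  refine tendsto_order.2 ⟨fun C hC => ?_, fun C hC => ?_⟩
  · obtain ⟨v, ⟨hv, hvt⟩, hCv⟩ := exists_lt_of_lt_runSup ht.le hC
    obtain rfl | hvt := hvt.eq_or_lt
    · filter_upwards [hpos, (hX.tendsto_leftLimAt ht).eventually_const_lt (hCv.trans_le hjump)]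
        with x hx hCx
      exact hCx.trans_le (le_runSup hX hx.1.le le_rfl)
    · filter_upwards [Ioo_mem_nhdsLT hvt] with x hx
      exact hCv.trans_le (le_runSup hX hv hx.1.le)
  · filter_upwards [hpos] with x hx
    exact (monotoneOn_runSup hX hx.1.le ht.le hx.2.le).trans_lt hC

lemma continuousOn_runSup_of_le_leftLimAt (hX : IsCadlag fun t => X t ω)
    (hjump : ∀ t, 0 ≤ t → X t ω ≤ leftLimAt (fun u => X u ω) t) :
    ContinuousOn (fun t => runSup X t ω) (Ici 0) := by
  intro t (ht : 0 ≤ t)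
  have hright := continuousWithinAt_runSup_Ici hX ht
  obtain rfl | ht := ht.eq_or_lt
  · exact hright
  · have hleft := continuousWithinAt_runSup_Iio hX ht (hjump t ht.le)
    exact (hleft.union hright).mono fun x _ => lt_or_ge x t

end RunningSupremum

/-- A path `g` observed at rational times has no record jumps if, uniformly on bounded time
intervals, its values exceed the supremum of the values up to time `s` by an arbitrarily small
amount shortly after `s`. For the restriction of a càdlàg path this expresses the continuity of the
running supremum; all quantifiers range over `ℚ≥0` to make it a measurable condition on `g`. -/
def HasNoRecordJumps (g : ℚ≥0 → ℝ) : Prop :=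
  ∀ T ε : ℚ≥0, 0 < ε → ∃ δ : ℚ≥0, 0 < δ ∧
    ∀ s r : ℚ≥0, s ≤ r → r ≤ T → r < s + δ → ∃ u ≤ s, g r < g u + ε

section RecordJumps

lemma measurableSet_hasNoRecordJumps : MeasurableSet {g | HasNoRecordJumps g} := by
  unfold HasNoRecordJumps
  measurability

lemma hasNoRecordJumps_sub_const {g : ℚ≥0 → ℝ} {c : ℝ} :
    HasNoRecordJumps (fun r => g r - c) ↔ HasNoRecordJumps g := by
  simp only [HasNoRecordJumps, sub_add_eq_add_sub, sub_lt_sub_iff_right]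

lemma hasNoRecordJumps_of_continuousOn_runSup {Ω : Type*} {X : ℝ → Ω → ℝ} {ω : Ω}
    (hX : IsCadlag fun t => X t ω) (hcont : ContinuousOn (fun t => runSup X t ω) (Ici 0)) :
    HasNoRecordJumps fun r => X r ω := by
  intro T ε hε
  obtain ⟨δ', hδ', hunif⟩ := Metric.uniformContinuousOn_iff.1
    ((isCompact_Icc (a := (0 : ℝ)) (b := T)).uniformContinuousOn_of_continuous
      (hcont.mono Icc_subset_Ici_self)) ε (by exact_mod_cast hε)
  obtain ⟨δ, hδ, hδδ'⟩ := exists_nnrat_btwn le_rfl hδ'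
  refine ⟨δ, by exact_mod_cast hδ, fun s r hsr hrT hrs => ?_⟩
  rify at hsr hrT hrs
  have hclose : dist (runSup X r ω) (runSup X s ω) < ε := by
    refine hunif r ⟨r.cast_nonneg, hrT⟩ s ⟨s.cast_nonneg, hsr.trans hrT⟩ ?_
    rw [Real.dist_eq, abs_of_nonneg (sub_nonneg.2 hsr)]
    linarith
  have hlt : X r ω - ε < runSup X s ω := by
    linarith [le_runSup hX r.cast_nonneg le_rfl, (abs_lt.1 hclose).2]
  obtain ⟨u, hus, hu⟩ := exists_nnrat_lt_of_lt_runSup hX hlt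
  exact ⟨u, hus, sub_lt_iff_lt_add.1 hu⟩

variable {f : ℝ → ℝ}

lemma HasNoRecordJumps.le_of_forall_mem_Ico_le {q : ℚ≥0} {t C : ℝ}
    (hrec : HasNoRecordJumps fun r => f (q + r)) (hqt : q < t)
    (hf : ContinuousWithinAt f (Ici t) t) (hC : ∀ u ∈ Ico (q : ℝ) t, f u ≤ C) : f t ≤ C := by
  by_contra! hlt
  obtain ⟨ε, hε, hεC⟩ := exists_nnrat_btwn le_rfl (sub_pos.2 hlt)
  obtain ⟨T, htT⟩ := exists_nat_gt t
  obtain ⟨δ, hδ, hrecδ⟩ := hrec T ε (by exact_mod_cast hε)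
  rify at hδ hrecδ
  obtain ⟨s, hs, hst⟩ := exists_nnrat_btwn (q.cast_nonneg.trans (le_max_left _ (t - δ / 2)))
    (max_lt hqt (by linarith : t - δ / 2 < t))
  obtain ⟨r, htr, hr, hCr⟩ := exists_nnrat_btwn_of_eventually_nhdsGE (s.cast_nonneg.trans hst.le)
    (lt_min htT (by linarith : t < t + δ / 2)) (hf.eventually_const_lt (lt_sub_iff_add_lt'.1 hεC))
  rw [max_lt_iff] at hs
  rw [lt_min_iff] at hr
  obtain ⟨s, rfl⟩ := exists_add_of_le (by exact_mod_cast hs.1.le : q ≤ s)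
  obtain ⟨r, rfl⟩ := exists_add_of_le (by exact_mod_cast (hqt.trans htr).le : q ≤ r)
  push_cast at hs hst htr hr hCr
  obtain ⟨u, hus, hu⟩ := hrecδ s r (by linarith)
    (by linarith [q.cast_nonneg (α := ℝ)]) (by linarith)
  linarith [hC (q + u) ⟨le_add_of_nonneg_right u.cast_nonneg, by linarith⟩]

lemma IsCadlag.le_leftLimAt_of_forall_hasNoRecordJumps (hf : IsCadlag f)
    (hrec : ∀ q : ℚ≥0, HasNoRecordJumps fun r => f (q + r)) {t : ℝ} (ht : 0 ≤ t) :
    f t ≤ leftLimAt f t := by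
  obtain rfl | ht := ht.eq_or_lt
  · simp [leftLimAt]
  refine le_of_forall_gt_imp_ge_of_dense fun C hC => ?_
  obtain ⟨a, hat, haC⟩ := mem_nhdsLT_iff_exists_Ioo_subset.1
    ((hf.tendsto_leftLimAt ht).eventually_lt_const hC)
  obtain ⟨q, haq, hqt⟩ := exists_nnrat_btwn (le_max_left 0 a) (max_lt ht hat)
  refine (hrec q).le_of_forall_mem_Ico_le hqt (hf.1 t ht.le) fun u hu => ?_
  exact (haC ⟨((le_max_right 0 a).trans_lt haq).trans_le hu.1, hu.2⟩).le

end RecordJumps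

/-- Joint stationarity of the increments: the increments from time `h` onwards have, as a process,
the same law as those from time `0`. This is stronger than the law of each single increment
depending only on its length. -/
def HasStationaryIncrements {T Ω E : Type*} [AddZeroClass T] [Sub E] [MeasurableSpace E]
    [MeasurableSpace Ω] (X : T → Ω → E) (P : Measure Ω) : Prop :=
  ∀ h : T, IdentDistrib (fun ω t => X (h + t) ω - X h ω) (fun ω t => X t ω - X 0 ω) P P

section Increments

variable {T Ω E : Type*} {m0 : MeasurableSpace Ω} {P : Measure Ω} [MeasurableSpace E]

lemma hasIndepIncrements_of_indep [Preorder T] [Sub E] [MeasurableSub₂ E]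
    [IsProbabilityMeasure P] {X : T → Ω → E} {𝓕 : T → MeasurableSpace Ω} (h𝓕 : Monotone 𝓕)
    (hadapted : ∀ t, Measurable[𝓕 t] (X t))
    (hindep : ∀ s t, s ≤ t →
      Indep (MeasurableSpace.comap (fun ω => X t ω - X s ω) inferInstance) (𝓕 s) P) :
    HasIndepIncrements X P := by
  refine hasIndepIncrements_iff_nat.2 fun τ hτ =>
    iIndepFun_iff_measure_inter_preimage_eq_mul.2 fun S => ?_
  induction S using Finset.induction_on_max with
  | empty => simp
  | insert n S hn ih =>
    intro sets hsets
    have hpast : MeasurableSet[𝓕 (τ n)]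
        (⋂ i ∈ S, (fun ω => X (τ (i + 1)) ω - X (τ i) ω) ⁻¹' sets i) := by
      refine Finset.measurableSet_biInter (m := 𝓕 (τ n)) S fun i hi => ?_
      have hadapted_le (j : ℕ) (hj : j ≤ n) : Measurable[𝓕 (τ n)] (X (τ j)) :=
        (hadapted _).mono (h𝓕 (hτ hj)) le_rfl
      exact ((hadapted_le _ (hn i hi)).sub (hadapted_le _ (hn i hi).le))
        (hsets i (Finset.mem_insert_of_mem hi))
    rw [Finset.prod_insert fun hnS => (hn n hnS).false,
      ← ih fun i hi => hsets i (Finset.mem_insert_of_mem hi), Finset.set_biInter_insert]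
    exact (Indep_iff _ _ _).1 (hindep _ _ (hτ n.le_succ)) _ _
      ⟨sets n, hsets n (Finset.mem_insert_self n S), rfl⟩ hpast

lemma exists_monotone_nat_subset_range [LinearOrder T] (I : Finset T) {a : T}
    (ha : ∀ t ∈ I, a ≤ t) :
    ∃ τ : ℕ → T, Monotone τ ∧ τ 0 = a ∧ (I : Set T) ⊆ range τ := by
  induction I using Finset.induction_on_min generalizing a with
  | empty => exact ⟨fun _ => a, monotone_const, rfl, by simp⟩
  | insert b I hb ih =>
    obtain ⟨τ, hτ, rfl, hI⟩ := ih fun t ht => (hb t ht).le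
    refine ⟨fun n => n.casesOn a τ, monotone_nat_of_le_succ ?_, rfl, ?_⟩
    · rintro (_ | n)
      · exact ha _ (Finset.mem_insert_self _ _)
      · exact hτ n.le_succ
    · rw [Finset.coe_insert, insert_subset_iff]
      exact ⟨⟨1, rfl⟩, fun t ht => (hI ht).imp' Nat.succ fun _ => id⟩

lemma hasStationaryIncrements_of_hasIndepIncrements [AddMonoid T] [LinearOrder T]
    [CanonicallyOrderedAdd T] [AddLeftMono T] [AddCommGroup E] [MeasurableAdd₂ E] [MeasurableSub₂ E]
    {X : T → Ω → E} (hX : ∀ t, Measurable (X t)) (hindep : HasIndepIncrements X P)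
    (hident : ∀ h s t, s ≤ t →
      IdentDistrib (fun ω => X (h + t) ω - X (h + s) ω) (fun ω => X t ω - X s ω) P P) :
    HasStationaryIncrements X P := by
  intro h
  have : IsProbabilityMeasure P := (hindep.nat (monotone_const (c := 0))).isProbabilityMeasure
  have hmeas (a : T) : Measurable fun ω t => X (a + t) ω - X a ω :=
    measurable_pi_lambda _ fun t => (hX _).sub (hX _)
  refine (identDistrib_iff_forall_finset_identDistrib (hmeas h).aemeasurable
    (by simpa using (hmeas 0).aemeasurable)).2 fun I => ?_
  obtain ⟨τ, hτ, hτ0, hI⟩ := exists_monotone_nat_subset_range I fun _ _ => zero_le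
  choose k hk using fun t : I => hI t.2
  have hsteps : IdentDistrib (fun ω n => X (h + τ (n + 1)) ω - X (h + τ n) ω)
      (fun ω n => X (τ (n + 1)) ω - X (τ n) ω) P P :=
    .pi (fun n => hident h _ _ (hτ n.le_succ)) (hindep.nat (hτ.const_add h)) (hindep.nat hτ)
  have hpartialSums : Measurable fun (g : ℕ → E) (t : I) => ∑ n ∈ Finset.range (k t), g n := by
    fun_prop
  convert hsteps.comp hpartialSums using 1
  · ext ω t
    simp [Finset.restrict, Finset.sum_range_sub fun n => X (h + τ n) ω, hk, hτ0]
  · ext ω t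
    simp [Finset.restrict, Finset.sum_range_sub fun n => X (τ n) ω, hk, hτ0]

end Increments

lemma HasStationaryIncrements.ae_hasNoRecordJumps_shift {Ω : Type*} {m0 : MeasurableSpace Ω}
    {P : Measure Ω} {X : ℝ → Ω → ℝ} (hstat : HasStationaryIncrements (fun t : ℝ≥0 => X t) P)
    (hrec : ∀ᵐ ω ∂P, HasNoRecordJumps fun r => X r ω) (q : ℚ≥0) :
    ∀ᵐ ω ∂P, HasNoRecordJumps fun r => X (q + r) ω := by
  have hident : IdentDistrib (fun ω (r : ℚ≥0) => X r ω - X 0 ω)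
      (fun ω (r : ℚ≥0) => X (q + r) ω - X q ω) P P := by
    have hrestrict : Measurable fun (g : ℝ≥0 → ℝ) (r : ℚ≥0) => g r := by fun_prop
    exact ((hstat q).comp hrestrict).symm
  simpa only [hasNoRecordJumps_sub_const] using
    hident.ae_snd measurableSet_hasNoRecordJumps (by simpa only [hasNoRecordJumps_sub_const])

theorem runSup_continuous_iff_noPosJumps_general {Ω : Type*} {m0 : MeasurableSpace Ω}
    {P : Measure Ω} {X : ℝ → Ω → ℝ} (hcadlag : ∀ᵐ ω ∂P, IsCadlag fun t => X t ω)
    (hstat : HasStationaryIncrements (fun t : ℝ≥0 => X t) P) :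
    (∀ᵐ ω ∂P, ContinuousOn (fun t => runSup X t ω) (Ici 0)) ↔
    (∀ᵐ ω ∂P, ∀ t, 0 ≤ t → X t ω ≤ leftLimAt (fun u => X u ω) t) := by
  constructor
  · intro hcont
    have hrec : ∀ᵐ ω ∂P, HasNoRecordJumps fun r => X r ω := by
      filter_upwards [hcadlag, hcont] with ω using hasNoRecordJumps_of_continuousOn_runSup
    filter_upwards [hcadlag, ae_all_iff.2 (hstat.ae_hasNoRecordJumps_shift hrec)] with ω hω hrecω
    exact fun t => hω.le_leftLimAt_of_forall_hasNoRecordJumps hrecω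
  · intro hjump
    filter_upwards [hcadlag, hjump] with ω using continuousOn_runSup_of_le_leftLimAt

namespace IsLevy

variable {Ω : Type*} {m0 : MeasurableSpace Ω} {P : Measure Ω} {F : Filtration ℝ m0}
  {X : ℝ → Ω → ℝ}

lemma measurable (hX : IsLevy P F X) (t : ℝ) : Measurable (X t) :=
  (hX.adapted t).mono (F.le t) le_rfl

lemma hasIndepIncrements (hX : IsLevy P F X) : HasIndepIncrements (fun t : ℝ≥0 => X t) P :=
  have := hX.isProb
  hasIndepIncrements_of_indep (𝓕 := fun t => F t) (fun _ _ hst => F.mono hst)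
    (fun t => hX.adapted t) fun s t hst => hX.indep s t s.2 hst

lemma identDistrib_sub_add_left (hX : IsLevy P F X) (h s t : ℝ≥0) (hst : s ≤ t) :
    IdentDistrib (fun ω => X ↑(h + t) ω - X ↑(h + s) ω) (fun ω => X t ω - X s ω) P P where
  aemeasurable_fst := ((hX.measurable _).sub (hX.measurable _)).aemeasurable
  aemeasurable_snd := ((hX.measurable _).sub (hX.measurable _)).aemeasurable
  map_eq := by
    rw [hX.statInc ↑(h + s) ↑(h + t) (h + s).2 (by gcongr), hX.statInc s t s.2 hst,
      NNReal.coe_add, NNReal.coe_add, add_sub_add_left_eq_sub]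

lemma hasStationaryIncrements (hX : IsLevy P F X) :
    HasStationaryIncrements (fun t : ℝ≥0 => X t) P :=
  hasStationaryIncrements_of_hasIndepIncrements (fun t => hX.measurable t) hX.hasIndepIncrements
    hX.identDistrib_sub_add_left

end IsLevy

/-- The running supremum of a Lévy process is a.s. continuous (on `[0,∞)`) iff the
process a.s. has no positive jumps. -/
theorem runSup_continuous_iff_noPosJumps {Ω : Type*} {m0 : MeasurableSpace Ω}
    (P : Measure Ω) (F : MeasureTheory.Filtration ℝ m0) (X : ℝ → Ω → ℝ)
    (hX : IsLevy P F X) :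
    (∀ᵐ ω ∂P, ContinuousOn (fun t => runSup X t ω) (Set.Ici (0 : ℝ))) ↔
    (∀ᵐ ω ∂P, ∀ t : ℝ, 0 ≤ t → X t ω ≤ leftLimAt (fun u => X u ω) t) :=
  runSup_continuous_iff_noPosJumps_general hX.cadlag hX.hasStationaryIncrements
end

section
/- Let X be a real-valued Lévy process on a filtered probability space satisfying the usual conditions. For x ∈ ℝ and Borel B ⊆ ℝ, set Q^x(B) := P({X(T_x) ∈ B} ∩ {T_x < ∞}). Then for every b > 0, every c ∈ (0,b) and every Borel set A ⊆ ℝ: Q^b(A) = ∫ Q^{b−x}(A − x) dQ̄^c(x), where Q̄^c denotes the completion of the (subprobability) measure Q^c, the integrand x ↦ Q^{b−x}(A − x) being measurable with respect to the Q^c-completion of the Borel σ-field, and A − x := {a − x : a ∈ A}. -/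
open MeasureTheory ProbabilityTheory Filter Set
open scoped ENNReal Topology

/-!
Given `X(T_c)` and `T_c < ∞`, the increments of `X` after `T_c` form an independent copy of `X`, by
the strong Markov property. As `T_c ≤ T_b`, the passage of `X` over `b` is the passage of these
increments over `b - X(T_c)`, and integrating over `X(T_c)` gives the identity.

The strong Markov property is applied to paths restricted to rational times, whose laws are
determined by finitely many increments at a time. Functionals of the path therefore have to depend
on rational times only, which `T_x` does not: it is replaced by the limit `S` of the times
`τ_n ↑ S` at which `X` first exceeds `x - 1/(n+1)`. Always `S ≤ T_x`, and equality holds almost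
surely because `X` does not jump at `S` when `τ_n < S` for all `n`: by the strong Markov property
at `τ_n`, the probability that `X` moves by more than `ε` within time `δ` after `τ_n` is at most the
same probability for the start at time `0`, and this vanishes as `δ → 0`.
-/

/-- Right-continuity on `[0,∞)` of a path `f`; its values at negative times are irrelevant. -/
def IsRightContinuous {E : Type*} [TopologicalSpace E] (f : ℝ → E) : Prop :=
  ∀ t : ℝ, 0 ≤ t → ContinuousWithinAt f (Ici t) t

/-- A process adapted to `F` with almost surely right-continuous paths and with stationary
increments that are independent of the past. The start at `0` is encoded in the stationarity: for
`s = t = 0` it says that `X 0` has the law of `0`. -/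
structure IsRightContinuousLevy {Ω E : Type*} {m0 : MeasurableSpace Ω} [MeasurableSpace E]
    [TopologicalSpace E] [Sub E] (P : Measure Ω) (F : Filtration ℝ m0) (X : ℝ → Ω → E) :
    Prop where
  adapted : ∀ t, Measurable[F t] (X t)
  ae_isRightContinuous : ∀ᵐ ω ∂P, IsRightContinuous (fun t => X t ω)
  indep : ∀ s t, 0 ≤ s → s ≤ t →
    Indep (MeasurableSpace.comap (fun ω => X t ω - X s ω) inferInstance) (F s) P
  map_sub : ∀ s t, 0 ≤ s → s ≤ t → P.map (fun ω => X t ω - X s ω) = P.map (X (t - s))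

lemma IsLevy.isRightContinuousLevy {Ω : Type*} {m0 : MeasurableSpace Ω} {P : Measure Ω}
    {F : Filtration ℝ m0} {X : ℝ → Ω → ℝ} (hX : IsLevy P F X) : IsRightContinuousLevy P F X where
  adapted := hX.adapted
  ae_isRightContinuous := hX.cadlag.mono fun _ h => h.1
  indep := hX.indep
  map_sub := hX.statInc

/-- The increments `X (s + u) - X s` after time `s`, recorded at rational `u ≥ 0` only, so that
they form a random element of a countable product. -/
def incrementPath {Ω E : Type*} [Sub E] (X : ℝ → Ω → E) (s : ℝ) (ω : Ω) : ℚ≥0 → E :=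
  fun u => X (s + u) ω - X s ω

/-! ### The Markov property at a fixed time -/

lemma exists_forall_mem_eq_natCast_mul (I : Finset ℚ≥0) :
    ∃ (h : ℚ≥0) (k : ℚ≥0 → ℕ), ∀ u ∈ I, u = k u * h := by
  refine ⟨(∏ v ∈ I, v.den : ℕ)⁻¹, fun u => u.num * ((∏ v ∈ I, v.den) / u.den), fun u hu => ?_⟩
  have hden : (u.den : ℚ≥0) ≠ 0 := by exact_mod_cast u.den_ne_zero
  have hprod : ((∏ v ∈ I, v.den : ℕ) : ℚ≥0) ≠ 0 := by
    exact_mod_cast Finset.prod_ne_zero_iff.2 fun v _ => NNRat.den_ne_zero v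
  rw [Nat.cast_mul, Nat.cast_div (Finset.dvd_prod_of_mem NNRat.den hu) hden]
  field_simp
  exact u.mul_den_eq_num

lemma exists_restrict_incrementPath_eq_comp {Ω E : Type*} [AddCommGroup E] [MeasurableSpace E]
    [MeasurableAdd₂ E] (X : ℝ → Ω → E) (I : Finset ℚ≥0) :
    ∃ (n : ℕ) (h : ℚ≥0) (g : (Fin n → E) → I → E), Measurable g ∧
      ∀ r : ℝ, I.restrict ∘ incrementPath X r =
        g ∘ fun ω (i : Fin n) => X (r + (i + 1 : ℕ) * h) ω - X (r + (i : ℕ) * h) ω := by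
  obtain ⟨h, k, hk⟩ := exists_forall_mem_eq_natCast_mul I
  let n := I.sup k
  refine ⟨n, h, fun w u => ∑ j ∈ Finset.range (k u), if hj : j < n then w ⟨j, hj⟩ else 0,
    ?_, fun r => ?_⟩
  · refine measurable_pi_lambda _ fun u => Finset.measurable_sum _ fun j _ => ?_
    split_ifs <;> fun_prop
  · ext ω u
    have hu : ((u : ℚ≥0) : ℝ) = k u * h := by
      exact_mod_cast congrArg (NNRat.cast (K := ℝ)) (hk u u.2)
    have hlt : ∀ j ∈ Finset.range (k u), j < n := fun j hj =>
      (Finset.mem_range.1 hj).trans_le (Finset.le_sup u.2)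
    simp only [Function.comp_apply]
    rw [Finset.sum_congr rfl fun j hj => dif_pos (hlt j hj),
      Finset.sum_range_sub fun j : ℕ => X (r + j * h) ω]
    simp [incrementPath, hu]

namespace IsRightContinuousLevy

section FixedTime

variable {Ω E : Type*} {m0 : MeasurableSpace Ω} [NormedAddCommGroup E] [MeasurableSpace E]
  {P : Measure Ω} {F : Filtration ℝ m0} {X : ℝ → Ω → E}

lemma measurable (hX : IsRightContinuousLevy P F X) (t : ℝ) : Measurable (X t) :=
  (hX.adapted t).mono (F.le t) le_rfl

lemma ae_zero_eq_zero [MeasurableSingletonClass E] (hX : IsRightContinuousLevy P F X) :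
    ∀ᵐ ω ∂P, X 0 ω = 0 := by
  have hmap : P.map (X 0) = P.map (fun _ => (0 : E)) := by
    simpa using (hX.map_sub 0 0 le_rfl le_rfl).symm
  have hne : MeasurableSet {x : E | x ≠ 0} := (measurableSet_singleton 0).compl
  have hnull : P.map (X 0) {x | x ≠ 0} = 0 := by
    rw [hmap, Measure.map_apply measurable_const hne]
    simp
  rwa [Measure.map_apply (hX.measurable 0) hne] at hnull

variable [BorelSpace E] [SecondCountableTopology E]

lemma measurable_increments {ι : Type*} (hX : IsRightContinuousLevy P F X) (s t : ι → ℝ) :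
    Measurable fun ω i => X (t i) ω - X (s i) ω :=
  measurable_pi_lambda _ fun _ => (hX.measurable _).sub (hX.measurable _)

lemma measurable_incrementPath (hX : IsRightContinuousLevy P F X) (s : ℝ) :
    Measurable (incrementPath X s) :=
  hX.measurable_increments _ _

lemma measure_inter_sub_mem (hX : IsRightContinuousLevy P F X) {s t : ℝ} (hs : 0 ≤ s)
    (hst : s ≤ t) {G : Set Ω} (hG : MeasurableSet[F s] G) {B : Set E} (hB : MeasurableSet B) :
    P (G ∩ {ω | X t ω - X s ω ∈ B}) = P G * P.map (X (t - s)) B := by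
  have hsub : Measurable fun ω => X t ω - X s ω := (hX.measurable t).sub (hX.measurable s)
  rw [inter_comm, ← hX.map_sub s t hs hst, Measure.map_apply hsub hB, mul_comm (P G)]
  exact (Indep_iff _ _ _).1 (hX.indep s t hs hst) _ G ⟨B, hB, rfl⟩ hG

lemma measure_inter_forall_sub_mem (hX : IsRightContinuousLevy P F X) {n : ℕ} {t : ℕ → ℝ}
    (ht : Monotone t) (ht0 : 0 ≤ t 0) {G : Set Ω} (hG : MeasurableSet[F (t 0)] G)
    {B : Fin n → Set E} (hB : ∀ i, MeasurableSet (B i)) :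
    P (G ∩ {ω | ∀ i : Fin n, X (t (i + 1)) ω - X (t i) ω ∈ B i}) =
      P G * ∏ i : Fin n, P.map (X (t (i + 1) - t i)) (B i) := by
  induction n generalizing t G with
  | zero => simp
  | succ n ih =>
    have h01 : t 0 ≤ t 1 := ht zero_le_one
    have hfirst : MeasurableSet[F (t 1)] (G ∩ {ω | X (t 1) ω - X (t 0) ω ∈ B 0}) :=
      (F.mono h01 _ hG).inter
        (((hX.adapted (t 1)).sub ((hX.adapted (t 0)).mono (F.mono h01) le_rfl)) (hB 0))
    have hrest := ih (t := fun i => t (i + 1)) (fun i j hij => ht (by lia)) (ht0.trans h01)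
      hfirst (fun i => hB i.succ)
    rw [hX.measure_inter_sub_mem ht0 h01 hG (hB 0), mul_assoc] at hrest
    simp only [Fin.forall_fin_succ, Fin.prod_univ_succ]
    rw [ofPred_and, ← inter_assoc]
    exact hrest

lemma map_restrict_increments [IsProbabilityMeasure P] (hX : IsRightContinuousLevy P F X)
    (n : ℕ) {t : ℕ → ℝ} (ht : Monotone t) (ht0 : 0 ≤ t 0) {G : Set Ω}
    (hG : MeasurableSet[F (t 0)] G) :
    (P.restrict G).map (fun ω (i : Fin n) => X (t (i + 1)) ω - X (t i) ω) =
      P G • Measure.pi fun i : Fin n => P.map (X (t (i + 1) - t i)) := by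
  have hmeas : Measurable fun ω (i : Fin n) => X (t (i + 1)) ω - X (t i) ω :=
    hX.measurable_increments _ _
  have hprob : ∀ r, IsProbabilityMeasure (P.map (X r)) := fun r =>
    Measure.isProbabilityMeasure_map (hX.measurable r).aemeasurable
  refine ext_of_generate_finite _ generateFrom_pi.symm isPiSystem_pi ?_ ?_
  · rintro _ ⟨B, hB, rfl⟩
    have hBm : ∀ i, MeasurableSet (B i) := fun i => hB i (mem_univ i)
    have hbox : MeasurableSet (univ.pi B) := MeasurableSet.univ_pi hBm
    rw [Measure.map_apply hmeas hbox, Measure.restrict_apply (hmeas hbox), inter_comm,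
      Measure.smul_apply, Measure.pi_pi, smul_eq_mul,
      ← hX.measure_inter_forall_sub_mem ht ht0 hG hBm]
    simp only [preimage, mem_univ_pi]
  · simp [Measure.map_apply hmeas]

lemma map_restrict_incrementPath [IsProbabilityMeasure P] (hX : IsRightContinuousLevy P F X)
    {s : ℝ} (hs : 0 ≤ s) {G : Set Ω} (hG : MeasurableSet[F s] G) :
    (P.restrict G).map (incrementPath X s) = P G • P.map (incrementPath X 0) := by
  have : IsFiniteMeasure (P G • P.map (incrementPath X 0)) :=
    Measure.smul_finite _ (measure_ne_top _ _)
  refine IsProjectiveLimit.unique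
    (P := fun I => (P G • P.map (incrementPath X 0)).map I.restrict) (fun I => ?_) fun _ => rfl
  obtain ⟨n, h, g, hg, hfactor⟩ := exists_restrict_incrementPath_eq_comp X I
  have hincr : ∀ {r : ℝ} {H : Set Ω}, 0 ≤ r → MeasurableSet[F r] H →
      (P.restrict H).map (I.restrict ∘ incrementPath X r) =
        P H • (Measure.pi fun _ : Fin n => P.map (X h)).map g := by
    intro r H hr hH
    have hmono : Monotone fun i : ℕ => r + i * (h : ℝ) := fun i j hij => by
      dsimp only; gcongr
    have hlaw := hX.map_restrict_increments n hmono (G := H) (by simpa using hr)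
      (F.mono (by simp) _ hH)
    have hstep : ∀ i : ℕ, r + (i + 1 : ℕ) * (h : ℝ) - (r + i * h) = h := fun i => by
      push_cast; ring
    simp only [hstep] at hlaw
    rw [hfactor, ← Measure.map_map hg (hX.measurable_increments _ _), hlaw, Measure.map_smul]
  have hzero := hincr le_rfl (MeasurableSet.univ (m := F 0))
  rw [Measure.restrict_univ, measure_univ, one_smul] at hzero
  have hrestrict := Finset.measurable_restrict (X := fun _ : ℚ≥0 => E) I
  beta_reduce
  rw [Measure.map_map hrestrict (hX.measurable_incrementPath s), hincr hs hG, Measure.map_smul,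
    Measure.map_map hrestrict (hX.measurable_incrementPath 0), hzero]

lemma map_restrict_prodMk_incrementPath [IsProbabilityMeasure P]
    (hX : IsRightContinuousLevy P F X) {s : ℝ} (hs : 0 ≤ s) {G : Set Ω}
    (hG : MeasurableSet[F s] G) :
    (P.restrict G).map (fun ω => (X s ω, incrementPath X s ω)) =
      ((P.restrict G).map (X s)).prod (P.map (incrementPath X 0)) := by
  have hpath := hX.measurable_incrementPath s
  refine (Measure.prod_eq fun B C hB hC => ?_).symm
  have hlaw := congrArg (· C) (hX.map_restrict_incrementPath hs ((hX.adapted s hB).inter hG))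
  rw [Measure.map_apply hpath hC, Measure.restrict_apply (hpath hC)] at hlaw
  rw [Measure.map_apply ((hX.measurable s).prodMk hpath) (hB.prod hC),
    Measure.restrict_apply (((hX.measurable s).prodMk hpath) (hB.prod hC)),
    Measure.map_apply (hX.measurable s) hB, Measure.restrict_apply (hX.measurable s hB),
    mk_preimage_prod, inter_comm (X s ⁻¹' B), inter_assoc]
  exact hlaw

end FixedTime

end IsRightContinuousLevy

/-! ### Right-continuous paths -/

/-- The point `(k + 1) / (m + 1)` of the grid of mesh `1 / (m + 1)`. -/
def gridPoint (m k : ℕ) : ℚ≥0 := (k + 1) / (m + 1)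

/-- The index `k` for which `t ∈ [k / (m + 1), (k + 1) / (m + 1))`, for `0 ≤ t`. -/
noncomputable def gridIndex (m : ℕ) (t : ℝ) : ℕ := ⌊((m : ℝ) + 1) * t⌋₊

/-- The least point of the grid of mesh `1 / (m + 1)` that lies strictly above `t`, for `0 ≤ t`. -/
noncomputable def gridAbove (m : ℕ) (t : ℝ) : ℚ≥0 := gridPoint m (gridIndex m t)

lemma coe_gridPoint (m k : ℕ) : (gridPoint m k : ℝ) = ((k : ℝ) + 1) / ((m : ℝ) + 1) := by
  simp [gridPoint]

lemma lt_gridAbove (m : ℕ) (t : ℝ) : t < gridAbove m t := by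
  rw [gridAbove, coe_gridPoint, lt_div_iff₀ (by positivity), mul_comm]
  exact Nat.lt_floor_add_one _

lemma gridAbove_le_add (m : ℕ) {t : ℝ} (ht : 0 ≤ t) :
    (gridAbove m t : ℝ) ≤ t + 1 / ((m : ℝ) + 1) := by
  have hm : (0 : ℝ) < (m : ℝ) + 1 := by positivity
  rw [gridAbove, coe_gridPoint, ← sub_le_iff_le_add, ← sub_div, add_sub_cancel_right,
    div_le_iff₀ hm, mul_comm t]
  exact Nat.floor_le (by positivity)

lemma gridIndex_eq_iff {m k : ℕ} {t : ℝ} (ht : 0 ≤ t) :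
    gridIndex m t = k ↔ (k : ℝ) / ((m : ℝ) + 1) ≤ t ∧ t < gridPoint m k := by
  have hm : (0 : ℝ) < (m : ℝ) + 1 := by positivity
  rw [gridIndex, Nat.floor_eq_iff (by positivity), coe_gridPoint, div_le_iff₀ hm,
    lt_div_iff₀ hm, mul_comm t]

lemma measurable_gridIndex (m : ℕ) : Measurable (gridIndex m) :=
  Nat.measurable_floor.comp (measurable_const_mul _)

lemma tendsto_gridAbove_add {t : ℝ} (ht : 0 ≤ t) (v : ℝ) :
    Tendsto (fun m => (gridAbove m t : ℝ) + v) atTop (𝓝[≥] (t + v)) := by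
  have hmesh : Tendsto (fun m : ℕ => t + 1 / ((m : ℝ) + 1)) atTop (𝓝 t) := by
    simpa using tendsto_one_div_add_atTop_nhds_zero_nat.const_add t
  have hgrid : Tendsto (fun m => (gridAbove m t : ℝ)) atTop (𝓝 t) :=
    tendsto_of_tendsto_of_tendsto_of_le_of_le tendsto_const_nhds hmesh
      (fun m => (lt_gridAbove m t).le) (fun m => gridAbove_le_add m ht)
  refine tendsto_nhdsWithin_iff.2 ⟨hgrid.add_const v, .of_forall fun m => ?_⟩
  exact add_le_add_left (lt_gridAbove m t).le v

namespace IsRightContinuous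

section

variable {E : Type*} [TopologicalSpace E] {f : ℝ → E}

lemma tendsto_gridAbove_add (hf : IsRightContinuous f) {t v : ℝ} (ht : 0 ≤ t) (hv : 0 ≤ v) :
    Tendsto (fun m => f (gridAbove m t + v)) atTop (𝓝 (f (t + v))) :=
  Tendsto.comp (hf (t + v) (by positivity)) (_root_.tendsto_gridAbove_add ht v)

lemma tendsto_gridAbove (hf : IsRightContinuous f) {t : ℝ} (ht : 0 ≤ t) :
    Tendsto (fun m => f (gridAbove m t)) atTop (𝓝 (f t)) := by
  simpa using hf.tendsto_gridAbove_add ht le_rfl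

lemma exists_nnrat_mem (hf : IsRightContinuous f) {t r : ℝ} (ht : 0 ≤ t) (hr : t < r)
    {U : Set E} (hU : U ∈ 𝓝 (f t)) : ∃ u : ℚ≥0, t < u ∧ (u : ℝ) < r ∧ f u ∈ U := by
  have hgrid : Tendsto (fun m => (gridAbove m t : ℝ)) atTop (𝓝 t) := by
    simpa using (_root_.tendsto_gridAbove_add ht 0).mono_right nhdsWithin_le_nhds
  obtain ⟨m, hmU, hmr⟩ :=
    ((hf.tendsto_gridAbove ht).eventually hU |>.and (hgrid.eventually (gt_mem_nhds hr))).exists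
  exact ⟨gridAbove m t, lt_gridAbove m t, hmr, hmU⟩

lemma exists_forall_Ico_mem (hf : IsRightContinuous f) {t : ℝ} (ht : 0 ≤ t) {U : Set E}
    (hU : U ∈ 𝓝 (f t)) : ∃ r > t, ∀ u ∈ Ico t r, f u ∈ U :=
  mem_nhdsGE_iff_exists_Ico_subset.1 (hf t ht hU)

end

lemma add_sub_const {E : Type*} [TopologicalSpace E] [Sub E] [ContinuousSub E] {f : ℝ → E}
    (hf : IsRightContinuous f) {s : ℝ} (hs : 0 ≤ s) :
    IsRightContinuous fun u => f (s + u) - f s := fun t ht =>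
  ((hf (s + t) (by positivity)).comp (continuous_const_add s).continuousWithinAt
    fun _ hu => add_le_add_right hu s).sub continuousWithinAt_const

end IsRightContinuous

/-! ### The strong Markov property -/

lemma map_prodMk_eq_prod_of_tendsto {Ω α β : Type*} {m0 : MeasurableSpace Ω}
    [TopologicalSpace α] [TopologicalSpace.PseudoMetrizableSpace α] [MeasurableSpace α]
    [BorelSpace α] [TopologicalSpace β] [TopologicalSpace.PseudoMetrizableSpace β]
    [MeasurableSpace β] [BorelSpace β]
    {ν : Measure Ω} [IsFiniteMeasure ν] {κ : Measure β} [IsFiniteMeasure κ]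
    {Z : ℕ → Ω → α} {Zlim : Ω → α} {U : ℕ → Ω → β} {Ulim : Ω → β}
    (hZ : ∀ m, AEMeasurable (Z m) ν) (hU : ∀ m, AEMeasurable (U m) ν)
    (hZlim : ∀ᵐ ω ∂ν, Tendsto (fun m => Z m ω) atTop (𝓝 (Zlim ω)))
    (hUlim : ∀ᵐ ω ∂ν, Tendsto (fun m => U m ω) atTop (𝓝 (Ulim ω)))
    (hprod : ∀ m, ν.map (fun ω => (Z m ω, U m ω)) = (ν.map (Z m)).prod κ) :
    ν.map (fun ω => (Zlim ω, Ulim ω)) = (ν.map Zlim).prod κ := by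
  have hZlim_meas : AEMeasurable Zlim ν := aemeasurable_of_tendsto_metrizable_ae atTop hZ hZlim
  have hUlim_meas : AEMeasurable Ulim ν := aemeasurable_of_tendsto_metrizable_ae atTop hU hUlim
  refine Measure.eq_prod_of_integral_mul_boundedContinuousFunction fun f g => ?_
  have hf : Measurable f := f.continuous.measurable
  have hg : Measurable g := g.continuous.measurable
  have hfg : StronglyMeasurable fun p : α × β => f p.1 * g p.2 :=
    ((hf.comp measurable_fst).mul (hg.comp measurable_snd)).stronglyMeasurable
  rw [integral_map (hZlim_meas.prodMk hUlim_meas) hfg.aestronglyMeasurable,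
    integral_map hZlim_meas hf.aestronglyMeasurable]
  have hleft : Tendsto (fun m => ∫ ω, f (Z m ω) * g (U m ω) ∂ν) atTop
      (𝓝 (∫ ω, f (Zlim ω) * g (Ulim ω) ∂ν)) := by
    refine tendsto_integral_of_dominated_convergence (fun _ => ‖f‖ * ‖g‖)
      (fun m => (hfg.measurable.comp_aemeasurable ((hZ m).prodMk (hU m))).aestronglyMeasurable)
      (integrable_const _) (fun m => .of_forall fun ω => ?_) ?_
    · rw [norm_mul]
      gcongr
      exacts [f.norm_coe_le_norm _, g.norm_coe_le_norm _]
    · filter_upwards [hZlim, hUlim] with ω h1 h2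
      exact ((f.continuous.tendsto _).comp h1).mul ((g.continuous.tendsto _).comp h2)
  have hright : Tendsto (fun m => ∫ ω, f (Z m ω) ∂ν) atTop (𝓝 (∫ ω, f (Zlim ω) ∂ν)) :=
    tendsto_integral_of_dominated_convergence (fun _ => ‖f‖)
      (fun m => (hf.comp_aemeasurable (hZ m)).aestronglyMeasurable) (integrable_const _)
      (fun m => .of_forall fun ω => f.norm_coe_le_norm _)
      (hZlim.mono fun ω h => (f.continuous.tendsto _).comp h)
  refine tendsto_nhds_unique hleft ((hright.mul_const _).congr fun m => ?_)
  rw [← integral_map (hZ m) hf.aestronglyMeasurable, ← integral_prod_mul, ← hprod m,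
    integral_map ((hZ m).prodMk (hU m)) hfg.aestronglyMeasurable]

lemma measurable_apply_of_countable {Ω ι β : Type*} [MeasurableSpace Ω] [MeasurableSpace ι]
    [MeasurableSpace β] [Countable ι] [MeasurableSingletonClass ι] {σ : Ω → ι} (hσ : Measurable σ)
    {f : ι → Ω → β} (hf : ∀ i, Measurable (f i)) : Measurable fun ω => f (σ ω) ω :=
  (measurable_from_prod_countable_right (f := fun p : ι × Ω => f p.1 p.2) hf).comp
    (hσ.prodMk measurable_id)

/-- Optional times of the filtration `F`, that is, stopping times of its right-continuous
version; they take values in `[0,∞]`. -/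
def IsOptionalTime {Ω : Type*} {m0 : MeasurableSpace Ω} (F : Filtration ℝ m0) (T : Ω → ℝ≥0∞) :
    Prop :=
  ∀ t : ℝ, MeasurableSet[F t] {ω | T ω < ENNReal.ofReal t}

namespace IsOptionalTime

variable {Ω : Type*} {m0 : MeasurableSpace Ω} {F : Filtration ℝ m0}

lemma measurableSet_lt_top {T : Ω → ℝ≥0∞} (hT : IsOptionalTime F T) :
    MeasurableSet {ω | T ω < ⊤} := by
  have hunion : {ω | T ω < ⊤} = ⋃ n : ℕ, {ω | T ω < ENNReal.ofReal n} := by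
    ext ω
    simp only [mem_ofPred_eq, mem_iUnion, ENNReal.ofReal_natCast]
    exact ⟨fun h => ENNReal.exists_nat_gt h.ne, fun ⟨n, hn⟩ => hn.trans (ENNReal.natCast_lt_top n)⟩
  exact hunion ▸ MeasurableSet.iUnion fun n => F.le n _ (hT n)

lemma measurable {T : Ω → ℝ≥0∞} (hT : IsOptionalTime F T) : Measurable T := by
  refine measurable_of_Iio fun x => ?_
  rcases eq_or_ne x ⊤ with rfl | hx
  · exact hT.measurableSet_lt_top
  · have hlt := F.le x.toReal _ (hT x.toReal)
    rwa [ENNReal.ofReal_toReal hx] at hlt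

lemma iSup {T : ℕ → Ω → ℝ≥0∞} (hT : ∀ n, IsOptionalTime F (T n)) :
    IsOptionalTime F fun ω => ⨆ n, T n ω := by
  intro t
  have hunion : {ω | ⨆ n, T n ω < ENNReal.ofReal t} =
      ⋃ (q : ℚ) (_ : (q : ℝ) < t), ⋂ n, {ω | T n ω < ENNReal.ofReal q} := by
    ext ω
    simp only [mem_ofPred_eq, mem_iUnion, mem_iInter, exists_prop]
    constructor
    · intro h
      have hne : ⨆ n, T n ω ≠ ⊤ := (h.trans ENNReal.ofReal_lt_top).ne
      obtain ⟨q, hq, hqt⟩ := exists_rat_btwn ((ENNReal.lt_ofReal_iff_toReal_lt hne).1 h)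
      exact ⟨q, hqt, fun n => (le_iSup (fun n => T n ω) n).trans_lt
        ((ENNReal.lt_ofReal_iff_toReal_lt hne).2 hq)⟩
    · rintro ⟨q, hqt, h⟩
      have hq : (0 : ℝ) < q := ENNReal.ofReal_pos.1 (bot_le.trans_lt (h 0))
      exact (iSup_le fun n => (h n).le).trans_lt
        ((ENNReal.ofReal_lt_ofReal_iff_of_nonneg hq.le).2 hqt)
  rw [hunion]
  exact MeasurableSet.iUnion fun q => MeasurableSet.iUnion fun hq => MeasurableSet.iInter fun n =>
    F.mono hq.le _ (hT n q)

lemma measurableSet_lt_top_inter_gridIndex {T : Ω → ℝ≥0∞} (hT : IsOptionalTime F T) (m k : ℕ) :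
    MeasurableSet[F (gridPoint m k)]
      ({ω | T ω < ⊤} ∩ (fun ω => gridIndex m (T ω).toReal) ⁻¹' {k}) := by
  have hsdiff : {ω | T ω < ⊤} ∩ (fun ω => gridIndex m (T ω).toReal) ⁻¹' {k} =
      {ω | T ω < ENNReal.ofReal (gridPoint m k)} \
        {ω | T ω < ENNReal.ofReal ((k : ℝ) / ((m : ℝ) + 1))} := by
    ext ω
    simp only [mem_inter_iff, mem_ofPred_eq, mem_preimage, mem_singleton_iff, Set.mem_sdiff,
      not_lt, gridIndex_eq_iff ENNReal.toReal_nonneg]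
    by_cases hfin : T ω = ⊤
    · simp [hfin]
    · rw [ENNReal.lt_ofReal_iff_toReal_lt hfin, ENNReal.ofReal_le_iff_le_toReal hfin]
      simp only [lt_top_iff_ne_top.2 hfin, true_and, and_comm]
  have hle : (k : ℝ) / ((m : ℝ) + 1) ≤ gridPoint m k := by
    rw [coe_gridPoint]; gcongr; linarith
  rw [hsdiff]
  exact (hT _).diff (F.mono hle _ (hT _))

end IsOptionalTime

namespace IsRightContinuousLevy

section RandomTime

variable {Ω E : Type*} {m0 : MeasurableSpace Ω} [NormedAddCommGroup E] [MeasurableSpace E]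
  {P : Measure Ω} {F : Filtration ℝ m0} {X : ℝ → Ω → E} {T : Ω → ℝ≥0∞}

lemma measurable_apply_gridAbove_add (hX : IsRightContinuousLevy P F X) (hT : Measurable T)
    (m : ℕ) (v : ℝ) : Measurable fun ω => X (gridAbove m (T ω).toReal + v) ω :=
  measurable_apply_of_countable ((measurable_gridIndex m).comp hT.ennreal_toReal)
    (f := fun k => X (gridPoint m k + v)) fun _ => hX.measurable _

lemma measurable_apply_gridAbove (hX : IsRightContinuousLevy P F X) (hT : Measurable T) (m : ℕ) :
    Measurable fun ω => X (gridAbove m (T ω).toReal) ω := by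
  simpa using hX.measurable_apply_gridAbove_add hT m 0

variable [BorelSpace E]

lemma aemeasurable_apply_toReal_add (hX : IsRightContinuousLevy P F X) (hT : Measurable T)
    {v : ℝ} (hv : 0 ≤ v) : AEMeasurable (fun ω => X ((T ω).toReal + v) ω) P :=
  aemeasurable_of_tendsto_metrizable_ae atTop
    (fun m => (hX.measurable_apply_gridAbove_add hT m v).aemeasurable)
    (hX.ae_isRightContinuous.mono fun _ h => h.tendsto_gridAbove_add ENNReal.toReal_nonneg hv)

lemma aemeasurable_apply_toReal (hX : IsRightContinuousLevy P F X) (hT : Measurable T) :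
    AEMeasurable (fun ω => X (T ω).toReal ω) P := by
  simpa using hX.aemeasurable_apply_toReal_add hT le_rfl

variable [SecondCountableTopology E]

lemma measurable_incrementPath_gridAbove (hX : IsRightContinuousLevy P F X) (hT : Measurable T)
    (m : ℕ) : Measurable fun ω => incrementPath X (gridAbove m (T ω).toReal) ω :=
  measurable_pi_lambda _ fun u =>
    (hX.measurable_apply_gridAbove_add hT m u).sub (hX.measurable_apply_gridAbove hT m)

lemma aemeasurable_incrementPath_toReal (hX : IsRightContinuousLevy P F X) (hT : Measurable T) :
    AEMeasurable (fun ω => incrementPath X (T ω).toReal ω) P :=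
  aemeasurable_pi_lambda _ fun u =>
    (hX.aemeasurable_apply_toReal_add hT u.cast_nonneg).sub (hX.aemeasurable_apply_toReal hT)

variable [IsProbabilityMeasure P]

lemma map_restrict_prodMk_incrementPath_of_countable {ι : Type*} [Countable ι]
    [MeasurableSpace ι] [MeasurableSingletonClass ι] (hX : IsRightContinuousLevy P F X)
    {q : ι → ℝ} (hq : ∀ i, 0 ≤ q i) {σ : Ω → ι} (hσ : Measurable σ) {S : Set Ω}
    (hS : ∀ i, MeasurableSet[F (q i)] (S ∩ σ ⁻¹' {i})) :
    (P.restrict S).map (fun ω => (X (q (σ ω)) ω, incrementPath X (q (σ ω)) ω)) =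
      ((P.restrict S).map (fun ω => X (q (σ ω)) ω)).prod (P.map (incrementPath X 0)) := by
  have hpieces : ∀ i, MeasurableSet (S ∩ σ ⁻¹' {i}) := fun i => F.le _ _ (hS i)
  have hdisj : Pairwise (Function.onFun Disjoint fun i => S ∩ σ ⁻¹' {i}) := fun i j hij =>
    ((disjoint_singleton.2 hij).preimage σ).mono inter_subset_right inter_subset_right
  have hsum : P.restrict S = Measure.sum fun i => P.restrict (S ∩ σ ⁻¹' {i}) := by
    rw [← Measure.restrict_iUnion hdisj hpieces, ← inter_iUnion, ← preimage_iUnion,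
      iUnion_of_singleton, preimage_univ, inter_univ]
  have hval : Measurable fun ω => X (q (σ ω)) ω :=
    measurable_apply_of_countable hσ fun i => hX.measurable (q i)
  have hpath : Measurable fun ω => incrementPath X (q (σ ω)) ω :=
    measurable_apply_of_countable hσ fun i => hX.measurable_incrementPath (q i)
  rw [hsum, Measure.map_sum (hval.prodMk hpath).aemeasurable, Measure.map_sum hval.aemeasurable,
    Measure.prod_sum_left]
  congr with i : 1
  have hσi : ∀ᵐ ω ∂P.restrict (S ∩ σ ⁻¹' {i}), σ ω = i :=
    (ae_restrict_mem (hpieces i)).mono fun _ h => h.2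
  rw [Measure.map_congr (hσi.mono fun ω h => by rw [h]),
    Measure.map_congr (g := X (q i)) (hσi.mono fun ω h => by rw [h])]
  exact hX.map_restrict_prodMk_incrementPath (hq i) (hS i)

lemma map_restrict_prodMk_incrementPath_toReal (hX : IsRightContinuousLevy P F X)
    (hT : IsOptionalTime F T) :
    (P.restrict {ω | T ω < ⊤}).map
        (fun ω => (X (T ω).toReal ω, incrementPath X (T ω).toReal ω)) =
      ((P.restrict {ω | T ω < ⊤}).map fun ω => X (T ω).toReal ω).prod
        (P.map (incrementPath X 0)) := by
  have hpaths := ae_restrict_of_ae (s := {ω | T ω < ⊤}) hX.ae_isRightContinuous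
  refine map_prodMk_eq_prod_of_tendsto
    (fun m => (hX.measurable_apply_gridAbove hT.measurable m).aemeasurable)
    (fun m => (hX.measurable_incrementPath_gridAbove hT.measurable m).aemeasurable)
    (hpaths.mono fun ω h => h.tendsto_gridAbove ENNReal.toReal_nonneg)
    (hpaths.mono fun ω h => tendsto_pi_nhds.2 fun u => ?_) fun m => ?_
  · exact (h.tendsto_gridAbove_add ENNReal.toReal_nonneg u.cast_nonneg).sub
      (h.tendsto_gridAbove ENNReal.toReal_nonneg)
  · exact hX.map_restrict_prodMk_incrementPath_of_countable (q := fun k => gridPoint m k)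
      (fun k => (gridPoint m k).cast_nonneg)
      ((measurable_gridIndex m).comp hT.measurable.ennreal_toReal)
      (hT.measurableSet_lt_top_inter_gridIndex m)

lemma measure_incrementPath_toReal_mem_le (hX : IsRightContinuousLevy P F X)
    (hT : IsOptionalTime F T) {C : Set (ℚ≥0 → E)} (hC : MeasurableSet C) :
    P {ω | T ω < ⊤ ∧ incrementPath X (T ω).toReal ω ∈ C} ≤ P.map (incrementPath X 0) C := by
  have hval := (hX.aemeasurable_apply_toReal hT.measurable).restrict (s := {ω | T ω < ⊤})
  have hpath := (hX.aemeasurable_incrementPath_toReal hT.measurable).restrict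
    (s := {ω | T ω < ⊤})
  calc P {ω | T ω < ⊤ ∧ incrementPath X (T ω).toReal ω ∈ C}
      = ((P.restrict {ω | T ω < ⊤}).map
          fun ω => (X (T ω).toReal ω, incrementPath X (T ω).toReal ω)) (univ ×ˢ C) := by
        rw [Measure.map_apply_of_aemeasurable (hval.prodMk hpath) (MeasurableSet.univ.prod hC),
          Measure.restrict_apply' hT.measurableSet_lt_top]
        simp only [mk_preimage_prod, preimage_univ, univ_inter, ofPred_and, inter_comm]
        rfl
    _ = ((P.restrict {ω | T ω < ⊤}).map fun ω => X (T ω).toReal ω) univ *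
          P.map (incrementPath X 0) C := by
        rw [hX.map_restrict_prodMk_incrementPath_toReal hT, Measure.prod_prod]
    _ ≤ 1 * P.map (incrementPath X 0) C := by
        gcongr
        rw [Measure.map_apply_of_aemeasurable hval MeasurableSet.univ]
        exact (Measure.restrict_apply_le _ _).trans prob_le_one
    _ = P.map (incrementPath X 0) C := one_mul _

end RandomTime

end IsRightContinuousLevy

/-! ### Quasi-left-continuity -/

lemma measure_le_of_eventually_mem {Ω : Type*} {m0 : MeasurableSpace Ω} {μ : Measure Ω}
    {B : Set Ω} {D : ℕ → Set Ω} {c : ℝ≥0∞} (hB : ∀ ω ∈ B, ∀ᶠ n in atTop, ω ∈ D n)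
    (hD : ∀ n, μ (D n) ≤ c) : μ B ≤ c := by
  have hmono : Monotone fun n => ⋂ k ≥ n, D k := fun m n hmn =>
    biInter_subset_biInter_left fun _ hk => hmn.trans hk
  calc μ B ≤ μ (⋃ n, ⋂ k ≥ n, D k) := measure_mono fun ω hω => by
        simpa only [mem_iUnion, mem_iInter] using eventually_atTop.1 (hB ω hω)
    _ = ⨆ n, μ (⋂ k ≥ n, D k) := hmono.measure_iUnion
    _ ≤ c := iSup_le fun n => (measure_mono (biInter_subset_of_mem le_rfl)).trans (hD n)

/-- The rational-time paths that leave the closed ball of radius `ε` around `0` before time `δ`. -/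
def earlyExit (E : Type*) [Norm E] (ε δ : ℝ) : Set (ℚ≥0 → E) :=
  {z | ∃ r : ℚ≥0, (r : ℝ) < δ ∧ ε < ‖z r‖}

lemma earlyExit_mono (E : Type*) [Norm E] (ε : ℝ) : Monotone (earlyExit E ε) :=
  fun _ _ hδ _ ⟨r, hr, hz⟩ => ⟨r, hr.trans_le hδ, hz⟩

lemma measurableSet_earlyExit (E : Type*) [NormedAddCommGroup E] [MeasurableSpace E]
    [OpensMeasurableSpace E] (ε δ : ℝ) : MeasurableSet (earlyExit E ε δ) := by
  have hunion : earlyExit E ε δ = ⋃ (r : ℚ≥0) (_ : (r : ℝ) < δ), {z | ε < ‖z r‖} := by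
    ext z
    simp [earlyExit]
  rw [hunion]
  exact MeasurableSet.iUnion fun r => MeasurableSet.iUnion fun _ =>
    measurableSet_lt measurable_const (measurable_pi_apply r).norm

lemma IsRightContinuous.mem_earlyExit {E : Type*} [NormedAddCommGroup E] {f : ℝ → E}
    (hf : IsRightContinuous f) {s t ε δ : ℝ} (hs : 0 ≤ s) (hst : s ≤ t) (hδ : t < s + δ)
    (hε : ε < ‖f t - f s‖) : (fun u : ℚ≥0 => f (s + u) - f s) ∈ earlyExit E ε δ := by
  obtain ⟨r, -, hr, hmem⟩ := (hf.add_sub_const hs).exists_nnrat_mem (sub_nonneg.2 hst)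
    (sub_lt_iff_lt_add'.2 hδ) (U := {x | ε < ‖x‖})
    (continuous_norm.continuousAt.eventually_const_lt (by simpa using hε))
  exact ⟨r, hr, hmem⟩

namespace IsRightContinuousLevy

variable {Ω E : Type*} {m0 : MeasurableSpace Ω} [NormedAddCommGroup E] [MeasurableSpace E]
  [BorelSpace E] [SecondCountableTopology E] {P : Measure Ω} [IsProbabilityMeasure P]
  {F : Filtration ℝ m0} {X : ℝ → Ω → E}

lemma tendsto_map_earlyExit (hX : IsRightContinuousLevy P F X) {ε : ℝ} (hε : 0 < ε) :
    Tendsto (fun j : ℕ => P.map (incrementPath X 0) (earlyExit E ε (1 / ((j : ℝ) + 1)))) atTop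
      (𝓝 0) := by
  have hanti : Antitone fun j : ℕ => earlyExit E ε (1 / ((j : ℝ) + 1)) := fun i j hij =>
    earlyExit_mono E ε (Nat.one_div_le_one_div hij)
  have hnull : P.map (incrementPath X 0) (⋂ j : ℕ, earlyExit E ε (1 / ((j : ℝ) + 1))) = 0 := by
    rw [Measure.map_apply (hX.measurable_incrementPath 0)
      (MeasurableSet.iInter fun j => measurableSet_earlyExit E _ _)]
    refine measure_eq_zero_iff_ae_notMem.2 (hX.ae_isRightContinuous.mono fun ω hf hω => ?_)
    obtain ⟨δ, hδ, hball⟩ :=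
      hf.exists_forall_Ico_mem le_rfl (Metric.closedBall_mem_nhds _ hε)
    obtain ⟨j, hj⟩ := exists_nat_one_div_lt hδ
    obtain ⟨r, hr, hexit⟩ := mem_iInter.1 hω j
    have hclose := hball r ⟨r.cast_nonneg, hr.trans hj⟩
    rw [mem_closedBall_iff_norm] at hclose
    exact hexit.not_ge (by simpa [incrementPath] using hclose)
  rw [← hnull]
  exact tendsto_measure_iInter_atTop
    (fun j => (measurableSet_earlyExit E _ _).nullMeasurableSet) hanti ⟨0, measure_ne_top _ _⟩

/-- Once `⨆ n, T n < T n + δ`, the path restarted at `T n` makes an early exit, and by the strong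
Markov property at `T n` this is no more likely than for the path started at time `0`. -/
lemma measure_eventually_lt_norm_sub_le (hX : IsRightContinuousLevy P F X)
    {T : ℕ → Ω → ℝ≥0∞} (hT : ∀ n, IsOptionalTime F (T n)) (hmono : ∀ ω, Monotone fun n => T n ω)
    (ε : ℝ) {δ : ℝ} (hδ : 0 < δ) :
    P {ω | IsRightContinuous (fun t => X t ω) ∧ ⨆ n, T n ω < ⊤ ∧
        ∀ᶠ n in atTop, ε < ‖X (⨆ n, T n ω).toReal ω - X (T n ω).toReal ω‖} ≤
      P.map (incrementPath X 0) (earlyExit E ε δ) := by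
  refine measure_le_of_eventually_mem (fun ω ⟨hf, hfin, hfar⟩ => ?_) fun n =>
    hX.measure_incrementPath_toReal_mem_le (hT n) (measurableSet_earlyExit E ε δ)
  have hle : ∀ n, T n ω ≤ ⨆ n, T n ω := le_iSup fun n => T n ω
  have hlim : Tendsto (fun n => (T n ω).toReal) atTop (𝓝 (⨆ n, T n ω).toReal) :=
    (ENNReal.tendsto_toReal hfin.ne).comp (tendsto_atTop_iSup (hmono ω))
  filter_upwards [hfar, hlim.eventually_const_lt (sub_lt_self _ hδ)] with n hn hclose
  exact ⟨(hle n).trans_lt hfin, hf.mem_earlyExit ENNReal.toReal_nonneg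
    (ENNReal.toReal_mono hfin.ne (hle n)) (sub_lt_iff_lt_add.1 hclose) hn⟩

lemma ae_mapClusterPt_apply_iSup (hX : IsRightContinuousLevy P F X)
    {T : ℕ → Ω → ℝ≥0∞} (hT : ∀ n, IsOptionalTime F (T n))
    (hmono : ∀ ω, Monotone fun n => T n ω) :
    ∀ᵐ ω ∂P, ⨆ n, T n ω < ⊤ →
      MapClusterPt (X (⨆ n, T n ω).toReal ω) atTop fun n => X (T n ω).toReal ω := by
  have hnull : ∀ k : ℕ, ∀ᵐ ω ∂P, ¬(IsRightContinuous (fun t => X t ω) ∧ ⨆ n, T n ω < ⊤ ∧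
      ∀ᶠ n in atTop, 1 / ((k : ℝ) + 1) < ‖X (⨆ n, T n ω).toReal ω - X (T n ω).toReal ω‖) :=
    fun k => measure_eq_zero_iff_ae_notMem.1 <| nonpos_iff_eq_zero.1 <|
      ge_of_tendsto' (hX.tendsto_map_earlyExit Nat.one_div_pos_of_nat) fun j =>
        hX.measure_eventually_lt_norm_sub_le hT hmono _ Nat.one_div_pos_of_nat
  filter_upwards [hX.ae_isRightContinuous, ae_all_iff.2 hnull] with ω hf hω hfin
  refine mapClusterPt_iff_frequently.2 fun U hU => ?_
  obtain ⟨ε, hε, hball⟩ := Metric.nhds_basis_closedBall.mem_iff.1 hU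
  obtain ⟨k, hk⟩ := exists_nat_one_div_lt hε
  have hfreq : ∃ᶠ n in atTop,
      ¬1 / ((k : ℝ) + 1) < ‖X (⨆ n, T n ω).toReal ω - X (T n ω).toReal ω‖ :=
    fun hfar => hω k ⟨hf, hfin, by simpa using hfar⟩
  refine hfreq.mono fun n hn => hball ?_
  rw [mem_closedBall_iff_norm']
  exact (not_lt.1 hn).trans hk.le

end IsRightContinuousLevy

/-! ### First passage of right-continuous paths -/

/-- The infimum of the rational times at which the path `z` is strictly above `a`. -/
noncomputable def exceedTime (a : ℝ) (z : ℚ≥0 → ℝ) : ℝ≥0∞ :=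
  ⨅ (u : ℚ≥0) (_ : a < z u), ENNReal.ofReal u

/-- The limit of the times at which the path `z` first exceeds the levels `x - 1 / (n + 1)`. Unlike
the first passage time over `x`, it is measurable in `z` and announced by optional times. -/
noncomputable def approachTime (x : ℝ) (z : ℚ≥0 → ℝ) : ℝ≥0∞ :=
  ⨆ n : ℕ, exceedTime (x - 1 / ((n : ℝ) + 1)) z

/-- The position at `approachTime x z` of the right-continuous path that extends `z`; the grid
points approximate this time, which may be irrational, from the right. -/
noncomputable def approachValue (x : ℝ) (z : ℚ≥0 → ℝ) : ℝ :=
  limsup (fun m => z (gridAbove m (approachTime x z).toReal)) atTop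

lemma exceedTime_lt_iff {a : ℝ} {z : ℚ≥0 → ℝ} {R : ℝ≥0∞} :
    exceedTime a z < R ↔ ∃ u : ℚ≥0, a < z u ∧ ENNReal.ofReal u < R := by
  simp only [exceedTime, iInf_lt_iff, exists_prop]

lemma exceedTime_le_of_lt {a : ℝ} {z : ℚ≥0 → ℝ} {u : ℚ≥0} (h : a < z u) :
    exceedTime a z ≤ ENNReal.ofReal u :=
  iInf₂_le u h

lemma exceedTime_mono (z : ℚ≥0 → ℝ) : Monotone fun a => exceedTime a z := fun _ _ hab =>
  iInf_mono fun _ => iInf_mono' fun h => ⟨hab.trans_lt h, le_rfl⟩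

lemma monotone_exceedTime_sub_one_div (x : ℝ) (z : ℚ≥0 → ℝ) :
    Monotone fun n : ℕ => exceedTime (x - 1 / ((n : ℝ) + 1)) z := fun _ _ hmn =>
  exceedTime_mono z (sub_le_sub_left (Nat.one_div_le_one_div hmn) x)

lemma approachTime_mono (z : ℚ≥0 → ℝ) : Monotone fun x => approachTime x z := fun _ _ hxy =>
  iSup_mono fun _ => exceedTime_mono z (sub_le_sub_right hxy _)

lemma measurable_exceedTime : Measurable fun p : ℝ × (ℚ≥0 → ℝ) => exceedTime p.1 p.2 := by
  classical
  simp only [exceedTime, iInf_eq_if]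
  exact Measurable.iInf fun u => Measurable.ite
    (measurableSet_lt measurable_fst ((measurable_pi_apply u).comp measurable_snd))
    measurable_const measurable_const

lemma measurable_approachTime : Measurable fun p : ℝ × (ℚ≥0 → ℝ) => approachTime p.1 p.2 :=
  Measurable.iSup fun _ => measurable_exceedTime.comp
    ((measurable_fst.sub measurable_const).prodMk measurable_snd)

lemma measurable_approachValue : Measurable fun p : ℝ × (ℚ≥0 → ℝ) => approachValue p.1 p.2 :=
  Measurable.limsup fun m => measurable_apply_of_countable
    ((measurable_gridIndex m).comp measurable_approachTime.ennreal_toReal)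
    (f := fun k (p : ℝ × (ℚ≥0 → ℝ)) => p.2 (gridPoint m k))
    fun k => (measurable_pi_apply (gridPoint m k)).comp measurable_snd

namespace IsRightContinuous

variable {f : ℝ → ℝ} {a b c s t x : ℝ}

lemma exceedTime_le (hf : IsRightContinuous f) (ht : 0 ≤ t) (h : a < f t) :
    exceedTime a (fun u => f u) ≤ ENNReal.ofReal t := by
  refine le_of_forall_gt fun R hR => ?_
  obtain ⟨r, htr, hrR⟩ := ENNReal.lt_iff_exists_nnreal_btwn.1 hR
  obtain ⟨u, -, hur, hu⟩ := hf.exists_nnrat_mem ht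
    ((ENNReal.ofReal_lt_coe_iff ht).1 htr) (Ioi_mem_nhds h)
  refine exceedTime_lt_iff.2 ⟨u, hu, lt_trans ?_ hrR⟩
  exact (ENNReal.ofReal_lt_coe_iff u.cast_nonneg).2 hur

lemma le_apply_exceedTime (hf : IsRightContinuous f)
    (hfin : exceedTime a (fun u => f u) < ⊤) :
    a ≤ f (exceedTime a (fun u => f u)).toReal := by
  by_contra! hlt
  obtain ⟨r, hr, hbelow⟩ :=
    hf.exists_forall_Ico_mem ENNReal.toReal_nonneg (Iio_mem_nhds hlt)
  obtain ⟨u, hau, hur⟩ := exceedTime_lt_iff.1 ((ENNReal.lt_ofReal_iff_toReal_lt hfin.ne).2 hr)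
  have hle : (exceedTime a (fun u => f u)).toReal ≤ u :=
    ENNReal.toReal_le_of_le_ofReal u.cast_nonneg (exceedTime_le_of_lt (z := fun u => f u) hau)
  have hlt' : (u : ℝ) < r := (ENNReal.ofReal_lt_ofReal_iff_of_nonneg u.cast_nonneg).1 hur
  exact (hbelow u ⟨hle, hlt'⟩).not_gt hau

lemma exceedTime_eq_add (hf : IsRightContinuous f) (hs : 0 ≤ s)
    (hle : ∀ r, 0 ≤ r → r < s → f r ≤ a) :
    exceedTime a (fun u => f u) =
      ENNReal.ofReal s + exceedTime (a - f s) (fun u => f (s + u) - f s) := by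
  apply le_antisymm
  · conv_rhs => simp only [exceedTime, ENNReal.add_iInf]
    refine le_iInf₂ fun u hu => ?_
    rw [← ENNReal.ofReal_add hs u.cast_nonneg]
    exact hf.exceedTime_le (add_nonneg hs u.cast_nonneg) (by linarith)
  · refine le_iInf₂ fun u hu => ?_
    have hsu : s ≤ u := not_lt.1 fun hus => (hle u u.cast_nonneg hus).not_gt hu
    calc ENNReal.ofReal s + exceedTime (a - f s) (fun u => f (s + u) - f s)
        ≤ ENNReal.ofReal s + ENNReal.ofReal (u - s) := by
          gcongr
          exact (hf.add_sub_const hs).exceedTime_le (sub_nonneg.2 hsu)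
            (by simpa only [add_sub_cancel, sub_lt_sub_iff_right] using hu)
      _ = ENNReal.ofReal u := by
          rw [← ENNReal.ofReal_add hs (sub_nonneg.2 hsu), add_sub_cancel]

lemma approachTime_le (hf : IsRightContinuous f) (ht : 0 ≤ t) (h : x ≤ f t) :
    approachTime x (fun u => f u) ≤ ENNReal.ofReal t :=
  iSup_le fun _ => hf.exceedTime_le ht ((sub_lt_self x Nat.one_div_pos_of_nat).trans_le h)

lemma approachValue_eq (hf : IsRightContinuous f) (x : ℝ) :
    approachValue x (fun u => f u) = f (approachTime x fun u => f u).toReal :=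
  (hf.tendsto_gridAbove ENNReal.toReal_nonneg).limsup_eq

/-- The levels `b - 1 / (n + 1)` eventually exceed `c`, and no such level is exceeded before `s`. -/
lemma approachTime_eq_add_of_lt (hf : IsRightContinuous f) (hcb : c < b)
    (hs : s = (approachTime c fun u => f u).toReal) :
    approachTime b (fun u => f u) =
      ENNReal.ofReal s + approachTime (b - f s) (fun u => f (s + u) - f s) := by
  have hs0 : 0 ≤ s := hs ▸ ENNReal.toReal_nonneg
  have hbelow : ∀ r, 0 ≤ r → r < s → f r ≤ c := fun r hr hrs => le_of_not_gt fun hcr =>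
    (hrs.trans_eq hs).not_ge (ENNReal.toReal_le_of_le_ofReal hr (hf.approachTime_le hr hcr.le))
  obtain ⟨N, hN⟩ := exists_nat_one_div_lt (sub_pos.2 hcb)
  rw [approachTime, approachTime, ← (monotone_exceedTime_sub_one_div b _).iSup_nat_add N,
    ← (monotone_exceedTime_sub_one_div (b - f s) _).iSup_nat_add N, ENNReal.add_iSup]
  refine iSup_congr fun n => ?_
  have hlevel : c ≤ b - 1 / (((n + N : ℕ) : ℝ) + 1) := by
    have := Nat.one_div_le_one_div (α := ℝ) (Nat.le_add_left N n)
    linarith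
  rw [hf.exceedTime_eq_add hs0 fun r hr hrs => (hbelow r hr hrs).trans hlevel, sub_right_comm]

lemma approachTime_eq_add (hf : IsRightContinuous f) (hcb : c ≤ b)
    (hfin : approachTime c (fun u => f u) < ⊤)
    (hs : s = (approachTime c fun u => f u).toReal) (hfs : c ≤ f s) :
    approachTime b (fun u => f u) =
      ENNReal.ofReal s + approachTime (b - f s) (fun u => f (s + u) - f s) := by
  rcases hcb.lt_or_eq with hcb | rfl
  · exact hf.approachTime_eq_add_of_lt hcb hs
  · have hs0 : 0 ≤ s := hs ▸ ENNReal.toReal_nonneg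
    have hzero := (hf.add_sub_const hs0).approachTime_le le_rfl (x := c - f s)
      (by simpa using hfs)
    rw [ENNReal.ofReal_zero, nonpos_iff_eq_zero] at hzero
    rw [hzero, add_zero, hs, ENNReal.ofReal_toReal hfin.ne]

end IsRightContinuous

/-! ### The overshoot identity -/

/-- The pairs `(y, z)` such that the path `y + z` passes over `b` at a position in `A`. -/
def passageSet (b : ℝ) (A : Set ℝ) : Set (ℝ × (ℚ≥0 → ℝ)) :=
  {p | approachTime (b - p.1) p.2 < ⊤ ∧ p.1 + approachValue (b - p.1) p.2 ∈ A}

lemma measurableSet_passageSet (b : ℝ) {A : Set ℝ} (hA : MeasurableSet A) :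
    MeasurableSet (passageSet b A) := by
  have hlevel : Measurable fun p : ℝ × (ℚ≥0 → ℝ) => (b - p.1, p.2) := by fun_prop
  exact (measurableSet_lt (measurable_approachTime.comp hlevel) measurable_const).inter
    ((measurable_fst.add (measurable_approachValue.comp hlevel)) hA)

namespace IsRightContinuousLevy

variable {Ω : Type*} {m0 : MeasurableSpace Ω} {P : Measure Ω} {F : Filtration ℝ m0}
  {X : ℝ → Ω → ℝ}

lemma isOptionalTime_exceedTime (hX : IsRightContinuousLevy P F X) (a : ℝ) :
    IsOptionalTime F fun ω => exceedTime a fun u => X u ω := by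
  intro t
  have hunion : {ω | exceedTime a (fun u => X u ω) < ENNReal.ofReal t} =
      ⋃ (u : ℚ≥0) (_ : (u : ℝ) < t), X u ⁻¹' Ioi a := by
    ext ω
    simp only [mem_ofPred_eq, exceedTime_lt_iff, mem_iUnion, mem_preimage, mem_Ioi, exists_prop,
      ENNReal.ofReal_lt_ofReal_iff_of_nonneg (NNRat.cast_nonneg _), and_comm]
  rw [hunion]
  exact MeasurableSet.iUnion fun u => MeasurableSet.iUnion fun hu =>
    F.mono hu.le _ (hX.adapted u measurableSet_Ioi)

lemma isOptionalTime_approachTime (hX : IsRightContinuousLevy P F X) (x : ℝ) :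
    IsOptionalTime F fun ω => approachTime x fun u => X u ω :=
  IsOptionalTime.iSup fun _ => hX.isOptionalTime_exceedTime _

variable [IsProbabilityMeasure P]

lemma ae_le_apply_approachTime (hX : IsRightContinuousLevy P F X) (x : ℝ) :
    ∀ᵐ ω ∂P, approachTime x (fun u => X u ω) < ⊤ →
      x ≤ X (approachTime x fun u => X u ω).toReal ω := by
  filter_upwards [hX.ae_isRightContinuous, hX.ae_mapClusterPt_apply_iSup
    (fun n : ℕ => hX.isOptionalTime_exceedTime (x - 1 / ((n : ℝ) + 1)))
    fun ω => monotone_exceedTime_sub_one_div x _] with ω hf hcluster hfin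
  by_contra! hlt
  obtain ⟨y, hy, hyx⟩ := exists_between hlt
  have hbelow := (hcluster hfin).frequently (Iio_mem_nhds hy)
  have hlevel : Tendsto (fun n : ℕ => x - 1 / ((n : ℝ) + 1)) atTop (𝓝 x) := by
    simpa using tendsto_const_nhds.sub (tendsto_one_div_add_atTop_nhds_zero_nat (𝕜 := ℝ))
  obtain ⟨n, hn, hyn⟩ := (hbelow.and_eventually (hlevel.eventually_const_lt hyx)).exists
  exact (hyn.trans_le (hf.le_apply_exceedTime ((le_iSup _ n).trans_lt hfin))).not_gt hn

lemma ae_hitT_eq_approachTime (hX : IsRightContinuousLevy P F X) (x : ℝ) :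
    ∀ᵐ ω ∂P, hitT X x ω = approachTime x fun u => X u ω := by
  filter_upwards [hX.ae_isRightContinuous, hX.ae_le_apply_approachTime x] with ω hf hle
  apply le_antisymm
  · rcases lt_or_eq_of_le (le_top (a := approachTime x fun u => X u ω)) with hfin | htop
    · exact sInf_le ⟨_, ⟨ENNReal.toReal_nonneg, hle hfin⟩, ENNReal.ofReal_toReal hfin.ne⟩
    · exact htop ▸ le_top
  · refine le_sInf ?_
    rintro _ ⟨t, ⟨ht, hxt⟩, rfl⟩
    exact hf.approachTime_le ht hxt

lemma map_stopVal_eq (hX : IsRightContinuousLevy P F X) (x : ℝ) :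
    (P.restrict {ω | hitT X x ω < ⊤}).map (stopVal X x) =
      (P.restrict {ω | approachTime x (fun u => X u ω) < ⊤}).map
        fun ω => X (approachTime x fun u => X u ω).toReal ω := by
  have htime := hX.ae_hitT_eq_approachTime x
  have hset : {ω | hitT X x ω < ⊤} =ᵐ[P] {ω | approachTime x (fun u => X u ω) < ⊤} :=
    eventuallyEq_set.2 (htime.mono fun ω h => by rw [mem_ofPred_eq, mem_ofPred_eq, h])
  rw [Measure.restrict_congr_set hset]
  exact Measure.map_congr (ae_restrict_of_ae (htime.mono fun ω h => by rw [stopVal, h]))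

lemma Qfun_sub_image_sub (hX : IsRightContinuousLevy P F X) (b y : ℝ) {A : Set ℝ}
    (hA : MeasurableSet A) :
    Qfun P X (b - y) ((fun a => a - y) '' A) =
      P.map (incrementPath X 0) (Prod.mk y ⁻¹' passageSet b A) := by
  rw [Measure.map_apply (hX.measurable_incrementPath 0)
    (measurable_prodMk_left (measurableSet_passageSet b hA)), Qfun]
  refine measure_congr (eventuallyEq_set.2 ?_)
  filter_upwards [hX.ae_isRightContinuous, hX.ae_zero_eq_zero,
    hX.ae_hitT_eq_approachTime (b - y)] with ω hf hzero htime
  have hpath : incrementPath X 0 ω = fun u : ℚ≥0 => X u ω := by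
    ext u
    rw [incrementPath, hzero, zero_add, sub_zero]
  simp only [mem_inter_iff, mem_ofPred_eq, mem_preimage, passageSet, hpath, hf.approachValue_eq,
    stopVal, htime, image_sub_right, add_comm y, and_comm]

lemma ae_stopVal_mem_and_hitT_lt_top_iff (hX : IsRightContinuousLevy P F X) {b c : ℝ}
    (hcb : c ≤ b) (A : Set ℝ) :
    ∀ᵐ ω ∂P, (stopVal X b ω ∈ A ∧ hitT X b ω < ⊤) ↔
      (X (approachTime c fun u => X u ω).toReal ω,
        incrementPath X (approachTime c fun u => X u ω).toReal ω) ∈ passageSet b A ∧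
      approachTime c (fun u => X u ω) < ⊤ := by
  filter_upwards [hX.ae_isRightContinuous, hX.ae_hitT_eq_approachTime b,
    hX.ae_le_apply_approachTime c] with ω hf htime hle
  rw [stopVal, htime]
  by_cases hfin : approachTime c (fun u => X u ω) < ⊤
  · set s := (approachTime c fun u => X u ω).toReal with hs
    have hs0 : 0 ≤ s := ENNReal.toReal_nonneg
    have hrestart : approachValue (b - X s ω) (incrementPath X s ω) =
        X (s + (approachTime (b - X s ω) (incrementPath X s ω)).toReal) ω - X s ω :=
      (hf.add_sub_const hs0).approachValue_eq (b - X s ω)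
    have htotal : approachTime b (fun u => X u ω) =
        ENNReal.ofReal s + approachTime (b - X s ω) (incrementPath X s ω) :=
      hf.approachTime_eq_add hcb hfin hs (hle hfin)
    simp only [htotal, passageSet, mem_ofPred_eq, hrestart, add_sub_cancel, hfin, and_true,
      ENNReal.add_lt_top, ENNReal.ofReal_lt_top, true_and]
    rw [and_comm]
    refine and_congr_right fun hfin' => ?_
    rw [ENNReal.toReal_add ENNReal.ofReal_ne_top hfin'.ne, ENNReal.toReal_ofReal hs0]
  · have hmono := approachTime_mono (fun u => X u ω) hcb
    exact iff_of_false (fun h => hfin (hmono.trans_lt h.2)) fun h => hfin h.2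

end IsRightContinuousLevy

theorem overshoot_measure_identity_general {Ω : Type*} {m0 : MeasurableSpace Ω} (P : Measure Ω)
    [IsProbabilityMeasure P] (F : Filtration ℝ m0) (X : ℝ → Ω → ℝ)
    (hX : IsRightContinuousLevy P F X) (b c : ℝ) (hcb : c ≤ b) (A : Set ℝ)
    (hA : MeasurableSet A) :
    Measurable (fun y : ℝ => Qfun P X (b - y) ((fun a => a - y) '' A)) ∧
    Qfun P X b A =
      ∫⁻ y, Qfun P X (b - y) ((fun a => a - y) '' A)
        ∂(Measure.map (stopVal X c) (P.restrict {ω | hitT X c ω < ⊤})) := by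
  have : IsProbabilityMeasure (P.map (incrementPath X 0)) :=
    Measure.isProbabilityMeasure_map (hX.measurable_incrementPath 0).aemeasurable
  have hpassage := measurableSet_passageSet b hA
  simp only [hX.Qfun_sub_image_sub b _ hA]
  refine ⟨measurable_measure_prodMk_left hpassage, ?_⟩
  have hT := hX.isOptionalTime_approachTime c
  have hpair := ((hX.aemeasurable_apply_toReal hT.measurable).prodMk
    (hX.aemeasurable_incrementPath_toReal hT.measurable)).restrict
    (s := {ω | approachTime c (fun u => X u ω) < ⊤})
  rw [hX.map_stopVal_eq, ← Measure.prod_apply hpassage,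
    ← hX.map_restrict_prodMk_incrementPath_toReal hT,
    Measure.map_apply_of_aemeasurable hpair hpassage,
    Measure.restrict_apply' hT.measurableSet_lt_top]
  exact measure_congr (eventuallyEq_set.2 (hX.ae_stopVal_mem_and_hitT_lt_top_iff hcb A))

/-- The overshoot identity `Q^b(A) = ∫ Q^{b−x}(A−x) dQ̄^c(x)` for `0 < c < b`, the
integrand being measurable w.r.t. the `Q^c`-completion of the Borel σ-field (here `Q^c`,
as a measure, is the law of `X(T_c)` under `P` restricted to `{T_c < ∞}`; integration
w.r.t. the completion `Q̄^c` coincides with integration w.r.t. `Q^c` for such integrands). -/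
theorem overshoot_measure_identity {Ω : Type*} {m0 : MeasurableSpace Ω}
    (P : Measure Ω) (F : MeasureTheory.Filtration ℝ m0) (X : ℝ → Ω → ℝ)
    (hX : IsLevy P F X)
    (b c : ℝ) (hb : 0 < c) (hcb : c < b) (A : Set ℝ) (hA : MeasurableSet A) :
    NullMeasurable (fun y : ℝ => Qfun P X (b - y) ((fun a => a - y) '' A))
      (Measure.map (stopVal X c) (P.restrict {ω | hitT X c ω < ⊤})) ∧
    Qfun P X b A =
      ∫⁻ y, Qfun P X (b - y) ((fun a => a - y) '' A)
        ∂(Measure.map (stopVal X c) (P.restrict {ω | hitT X c ω < ⊤})) := by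
  have := hX.isProb
  obtain ⟨hmeas, heq⟩ :=
    overshoot_measure_identity_general P F X hX.isRightContinuousLevy b c hcb.le A hA
  exact ⟨hmeas.nullMeasurable, heq⟩
end
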